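/- arXiv:2209.02114 — 4 statements merged into one kernel-verified Lean document; each statement's English description precedes it below -/
import Mathlib

section
/- Let A be a countable set and a ∈ A. Let Z be a random variable on a probability space (Ω,P) taking values in A∖{a} with finite Shannon entropy H(Z) < ∞. Then for every ε > 0 there exists δ > 0 (depending only on ε and the law of Z) such that for every measurable set E ⊆ Ω with P(E) < δ, the random variable Y defined by Y(ω) = Z(ω) if ω ∈ E and Y(ω) = a if ω ∉ E satisfies H(Y) < ε. -/
open MeasureTheory
open scoped Classical ENNReal

/-- Shannon entropy of a random variable `Y` taking values in a countable set,
as a value in `ℝ≥0∞`: `H(Y) = ∑_x (−P(Y = x) log P(Y = x))`. -/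
noncomputable def shannonEntropy {Ω A : Type*} [MeasurableSpace Ω]
    (P : Measure Ω) (Y : Ω → A) : ℝ≥0∞ :=
  ∑' x : A, ENNReal.ofReal (Real.negMulLog ((P (Y ⁻¹' {x})).toReal))

/-!
Let `p x = P(Z = x)` for `x ≠ a` and `p a = 1`. All the laws of the variables `Y` are dominated
by `p`, and the inequality `-q log q ≤ -p log p + p` for `0 ≤ q ≤ p ≤ 1` turns this into a
summable bound on the terms of `H(Y)`. As `P(E) → 0`, the law of `Y` converges pointwise to the
Dirac mass at `a`, so dominated convergence gives `H(Y) → 0`.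
-/

open Filter Real Topology

section NegMulLog

theorem negMulLog_le_negMulLog_add {p q : ℝ} (hq : 0 ≤ q) (hqp : q ≤ p) (hp : p ≤ 1) :
    negMulLog q ≤ negMulLog p + p := by
  obtain rfl | hp0 := (hq.trans hqp).eq_or_lt
  · simp [le_antisymm hqp hq]
  have hratio : 0 ≤ q / p := by positivity
  have hp_entropy : 0 ≤ negMulLog p := negMulLog_nonneg hp0.le hp
  calc negMulLog q = negMulLog (q / p * p) := by rw [div_mul_cancel₀ q hp0.ne']
    _ = p * negMulLog (q / p) + q / p * negMulLog p := negMulLog_mul _ _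
    _ ≤ p * 1 + 1 * negMulLog p := by
        gcongr
        · linarith [negMulLog_le_one_sub_self hratio]
        · exact (div_le_one hp0).2 hqp
    _ = negMulLog p + p := by ring

variable {A : Type*} {p : A → ℝ}

theorem summable_negMulLog_of_le {q : A → ℝ} (hp : Summable p)
    (hp_entropy : Summable fun x => negMulLog (p x)) (hp_one : ∀ x, p x ≤ 1)
    (hq : ∀ x, 0 ≤ q x) (hqp : ∀ x, q x ≤ p x) : Summable fun x => negMulLog (q x) :=
  .of_nonneg_of_le (fun x => negMulLog_nonneg (hq x) ((hqp x).trans (hp_one x)))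
    (fun x => negMulLog_le_negMulLog_add (hq x) (hqp x) (hp_one x)) (hp_entropy.add hp)

theorem tendsto_tsum_negMulLog_of_le {ι : Type*} {l : Filter ι} {q : ι → A → ℝ} {q₀ : A → ℝ}
    (hp : Summable p) (hp_entropy : Summable fun x => negMulLog (p x)) (hp_one : ∀ x, p x ≤ 1)
    (hq : ∀ i x, 0 ≤ q i x) (hqp : ∀ i x, q i x ≤ p x)
    (hlim : ∀ x, Tendsto (fun i => q i x) l (𝓝 (q₀ x))) :
    Tendsto (fun i => ∑' x, negMulLog (q i x)) l (𝓝 (∑' x, negMulLog (q₀ x))) := by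
  refine tendsto_tsum_of_dominated_convergence (hp_entropy.add hp)
    (fun x => (continuous_negMulLog.tendsto _).comp (hlim x)) (.of_forall fun i x => ?_)
  rw [norm_of_nonneg (negMulLog_nonneg (hq i x) ((hqp i x).trans (hp_one x)))]
  exact negMulLog_le_negMulLog_add (hq i x) (hqp i x) (hp_one x)

end NegMulLog

section Law

variable {Ω A : Type*} [MeasurableSpace Ω] {P : Measure Ω}

theorem summable_measureReal_preimage_singleton [MeasurableSpace A] [MeasurableSingletonClass A]
    [IsFiniteMeasure P] {Y : Ω → A} (hY : AEMeasurable Y P) :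
    Summable fun x => P.real (Y ⁻¹' {x}) := by
  have hfibers : Pairwise (Function.onFun (AEDisjoint P) fun x => Y ⁻¹' {x}) := fun _ _ hxy =>
    (Disjoint.preimage Y (Set.disjoint_singleton.2 hxy)).aedisjoint
  have hle := tsum_meas_le_meas_iUnion_of_disjoint₀ P
    (fun x => hY.nullMeasurableSet_preimage (measurableSet_singleton x)) hfibers
  exact ENNReal.summable_toReal (hle.trans_lt (measure_lt_top P _)).ne

theorem abs_measureReal_preimage_sub_le [IsFiniteMeasure P] (Y Y' : Ω → A) (s : Set A) :
    |P.real (Y ⁻¹' s) - P.real (Y' ⁻¹' s)| ≤ P.real {ω | Y ω ≠ Y' ω} := by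
  have hle (U V : Ω → A) : P.real (U ⁻¹' s) ≤ P.real (V ⁻¹' s) + P.real {ω | U ω ≠ V ω} := by
    refine (measureReal_mono fun ω hω => ?_).trans (measureReal_union_le _ _)
    by_cases h : U ω = V ω
    · exact .inl (by simpa [h] using hω)
    · exact .inr h
  have hY := hle Y Y'
  have hY' := hle Y' Y
  simp only [ne_comm (a := Y' _)] at hY'
  rw [abs_sub_le_iff]
  constructor <;> linarith

theorem tendsto_measureReal_preimage [IsFiniteMeasure P] {ι : Type*} {l : Filter ι}
    {Y : ι → Ω → A} {Y₀ : Ω → A} (hY : Tendsto (fun i => P {ω | Y i ω ≠ Y₀ ω}) l (𝓝 0))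
    (s : Set A) : Tendsto (fun i => P.real (Y i ⁻¹' s)) l (𝓝 (P.real (Y₀ ⁻¹' s))) := by
  have hne : Tendsto (fun i => P.real {ω | Y i ω ≠ Y₀ ω}) l (𝓝 0) :=
    (ENNReal.tendsto_toReal ENNReal.zero_ne_top).comp hY
  exact tendsto_iff_dist_tendsto_zero.2 <|
    squeeze_zero (fun _ => dist_nonneg) (fun i => abs_measureReal_preimage_sub_le (Y i) Y₀ s) hne

end Law

section ShannonEntropy

variable {Ω A : Type*} [MeasurableSpace Ω] {P : Measure Ω} [IsProbabilityMeasure P]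

theorem negMulLog_measureReal_nonneg (s : Set Ω) : 0 ≤ negMulLog (P.real s) :=
  negMulLog_nonneg measureReal_nonneg measureReal_le_one

theorem summable_negMulLog_of_shannonEntropy_ne_top {Y : Ω → A} (hY : shannonEntropy P Y ≠ ⊤) :
    Summable fun x => negMulLog (P.real (Y ⁻¹' {x})) :=
  (ENNReal.summable_toReal hY).congr fun _ =>
    ENNReal.toReal_ofReal (negMulLog_measureReal_nonneg _)

theorem shannonEntropy_eq_ofReal_tsum {Y : Ω → A}
    (hY : Summable fun x => negMulLog (P.real (Y ⁻¹' {x}))) :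
    shannonEntropy P Y = ENNReal.ofReal (∑' x, negMulLog (P.real (Y ⁻¹' {x}))) :=
  (ENNReal.ofReal_tsum_of_nonneg (fun _ => negMulLog_measureReal_nonneg _) hY).symm

theorem shannonEntropy_const (a : A) : shannonEntropy P (fun _ => a) = 0 := by
  refine ENNReal.tsum_eq_zero.2 fun x => ?_
  by_cases hx : a = x <;> simp [hx]

theorem tendsto_shannonEntropy_of_le {ι : Type*} {l : Filter ι} {p : A → ℝ} {Y : ι → Ω → A}
    {Y₀ : Ω → A} (hp : Summable p) (hp_entropy : Summable fun x => negMulLog (p x))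
    (hp_one : ∀ x, p x ≤ 1) (hYp : ∀ i x, P.real (Y i ⁻¹' {x}) ≤ p x)
    (hY : Tendsto (fun i => P {ω | Y i ω ≠ Y₀ ω}) l (𝓝 0)) :
    Tendsto (fun i => shannonEntropy P (Y i)) l (𝓝 (shannonEntropy P Y₀)) := by
  obtain rfl | _ := l.eq_or_neBot
  · exact tendsto_bot
  have hlaw (x : A) := tendsto_measureReal_preimage hY {x}
  have hsummable {U : Ω → A} (hU : ∀ x, P.real (U ⁻¹' {x}) ≤ p x) :=
    summable_negMulLog_of_le hp hp_entropy hp_one (fun _ => measureReal_nonneg) hU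
  have hY₀p (x : A) : P.real (Y₀ ⁻¹' {x}) ≤ p x := le_of_tendsto' (hlaw x) fun i => hYp i x
  rw [shannonEntropy_eq_ofReal_tsum (hsummable hY₀p)]
  simp only [fun i => shannonEntropy_eq_ofReal_tsum (hsummable (hYp i))]
  exact ENNReal.tendsto_ofReal <| tendsto_tsum_negMulLog_of_le hp hp_entropy hp_one
    (fun _ _ => measureReal_nonneg) hYp hlaw

theorem measureReal_preimage_ite_le_update (a x : A) (Z : Ω → A) (E : Set Ω) :
    P.real ((fun ω => if ω ∈ E then Z ω else a) ⁻¹' {x}) ≤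
      Function.update (fun y => P.real (Z ⁻¹' {y})) a 1 x := by
  obtain rfl | hx := eq_or_ne x a
  · simpa only [Function.update_self] using measureReal_le_one
  rw [Function.update_of_ne hx]
  refine measureReal_mono fun ω hω => ?_
  by_cases h : ω ∈ E
  · simpa [h] using hω
  · exact absurd (by simpa [h] using hω) hx.symm

variable [MeasurableSpace A] [MeasurableSingletonClass A]

theorem tendsto_shannonEntropy_ite {ι : Type*} {l : Filter ι} {E : ι → Set Ω} (a : A) {Z : Ω → A}
    (hZ : AEMeasurable Z P) (hent : shannonEntropy P Z ≠ ⊤)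
    (hE : Tendsto (fun i => P (E i)) l (𝓝 0)) :
    Tendsto (fun i => shannonEntropy P (fun ω => if ω ∈ E i then Z ω else a)) l (𝓝 0) := by
  let p : A → ℝ := Function.update (fun x => P.real (Z ⁻¹' {x})) a 1
  have hp : Summable p := (summable_measureReal_preimage_singleton hZ).update a 1
  have hp_entropy : Summable fun x => negMulLog (p x) := by
    simpa only [p, Function.apply_update (fun _ => negMulLog)] using
      (summable_negMulLog_of_shannonEntropy_ne_top hent).update a (negMulLog 1)
  have hp_one (x : A) : p x ≤ 1 := by
    obtain rfl | hx := eq_or_ne x a <;> simp [p, *, measureReal_le_one]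
  have hne : Tendsto (fun i => P {ω | (if ω ∈ E i then Z ω else a) ≠ a}) l (𝓝 0) :=
    tendsto_of_tendsto_of_tendsto_of_le_of_le tendsto_const_nhds hE (fun _ => zero_le)
      fun i => measure_mono fun ω hω => by_contra fun h => hω (if_neg h)
  rw [← shannonEntropy_const (P := P) a]
  exact tendsto_shannonEntropy_of_le hp hp_entropy hp_one
    (fun i x => measureReal_preimage_ite_le_update a x Z (E i)) hne

end ShannonEntropy

theorem statement0_general {Ω A : Type*} [MeasurableSpace Ω] [MeasurableSpace A]
    [MeasurableSingletonClass A] (P : Measure Ω) [IsProbabilityMeasure P] (a : A) {Z : Ω → A}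
    (hZ : AEMeasurable Z P) (hent : shannonEntropy P Z < ⊤) (ε : ℝ) (hε : 0 < ε) :
    ∃ δ : ℝ, 0 < δ ∧ ∀ E : Set Ω, P E < ENNReal.ofReal δ →
      shannonEntropy P (fun ω => if ω ∈ E then Z ω else a) < ENNReal.ofReal ε := by
  have hlim := tendsto_shannonEntropy_ite a hZ hent.ne (tendsto_comap (f := P) (x := 𝓝 0))
  have hsmall := hlim.eventually_lt_const (ENNReal.ofReal_pos.2 hε)
  obtain ⟨c, hc, hsub⟩ := (ENNReal.nhds_zero_basis.comap P).eventually_iff.1 hsmall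
  obtain ⟨δ, -, hδ, hδc⟩ := ENNReal.lt_iff_exists_real_btwn.1 hc
  exact ⟨δ, ENNReal.ofReal_pos.1 hδ, fun E hPE => hsub (hPE.trans hδc)⟩

/-- if `Z` is a random variable with values in `A \ {a}` and finite
entropy, then for every `ε > 0` there is `δ > 0` such that for every measurable
`E ⊆ Ω` with `P(E) < δ`, the variable equal to `Z` on `E` and to `a` off `E`
has entropy `< ε`. -/
theorem statement0 {Ω A : Type*} [MeasurableSpace Ω] [MeasurableSpace A]
    [MeasurableSingletonClass A] [Countable A]
    (P : Measure Ω) [IsProbabilityMeasure P]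
    (a : A) (Z : Ω → A) (hZmeas : Measurable Z) (hZne : ∀ ω, Z ω ≠ a)
    (hent : shannonEntropy P Z < ⊤) :
    ∀ ε : ℝ, 0 < ε → ∃ δ : ℝ, 0 < δ ∧
      ∀ E : Set Ω, MeasurableSet E → P E < ENNReal.ofReal δ →
        shannonEntropy P (fun ω => if ω ∈ E then Z ω else a) < ENNReal.ofReal ε := by
  intro ε hε
  obtain ⟨δ, hδ, h⟩ := statement0_general P a hZmeas.aemeasurable hent ε hε
  exact ⟨δ, hδ, fun E _ => h E⟩
end

section
/- Let A be a countable set, a ∈ A, and p a probability distribution on A∖{a} with finite Shannon entropy. For every ε > 0 there exists δ > 0 (depending only on ε and p) such that: for every probability space (Ω,P), every integer m ≥ 1, every family of random variables Z_1,…,Z_m each with law p (not necessarily independent), and every measurable set E ⊆ Ω with P(E) < δ, the A^m-valued random variable Y defined by Y(ω) = (Z_1(ω),…,Z_m(ω)) if ω ∈ E and Y(ω) = (a,…,a) if ω ∉ E satisfies H(Y) ≤ m·ε. -/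
open MeasureTheory
open scoped Classical ENNReal

/-- Shannon entropy of a probability distribution `p` on a countable set. -/
noncomputable def distEntropy {A : Type*} [MeasurableSpace A]
    (p : Measure A) : ℝ≥0∞ :=
  ∑' x : A, ENNReal.ofReal (Real.negMulLog ((p {x}).toReal))

/-!
The entropy of a law is bounded by its cross entropy against any reference law. Let `ν` be the law
of `(Z₁, …, Z_m)` restricted to `E`; for the product reference law `p ⊗ ⋯ ⊗ p` the cross entropy
splits over the coordinates, so `H(Y)` is at most the binary entropy of `P(E)` plus
`∑ i, ∫ -log p dνᵢ`, where the marginals `νᵢ` have mass `P(E)` and satisfy `νᵢ ≤ p`. The function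
`-log p` is `p`-integrable because `p` has finite entropy, so absolute continuity of the integral
makes each summand small, uniformly in `i`, in `m` and in the coupling of the `Zᵢ`.
-/

open Filter ProbabilityTheory Topology

section AbsoluteContinuity

variable {α : Type*} [MeasurableSpace α] {μ : Measure α} {f : α → ℝ≥0∞}

lemma tendsto_lintegral_tsub_natCast (hf : AEMeasurable f μ) (hfint : ∫⁻ x, f x ∂μ ≠ ⊤) :
    Tendsto (fun n : ℕ => ∫⁻ x, (f x - n) ∂μ) atTop (𝓝 0) := by
  rw [← lintegral_zero (μ := μ)]
  refine tendsto_lintegral_of_dominated_convergence' f (fun n => hf.sub_const _)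
    (fun n => .of_forall fun x => tsub_le_self) hfint ?_
  filter_upwards [ae_lt_top' hf hfint] with x hx
  obtain ⟨N, hN⟩ := ENNReal.exists_nat_gt hx.ne
  refine tendsto_const_nhds.congr' ?_
  filter_upwards [eventually_ge_atTop N] with n hn
  exact (tsub_eq_zero_of_le (hN.le.trans (Nat.cast_le.2 hn))).symm

lemma exists_pos_forall_le_lintegral_le_of_measure_univ_lt (hf : AEMeasurable f μ)
    (hfint : ∫⁻ x, f x ∂μ ≠ ⊤) {ε : ℝ≥0∞} (hε : 0 < ε) :
    ∃ δ > 0, ∀ ν ≤ μ, ν Set.univ < δ → ∫⁻ x, f x ∂ν ≤ ε := by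
  obtain ⟨n, hn⟩ := ((tendsto_lintegral_tsub_natCast hf hfint).eventually_lt_const hε).exists
  set tail := ∫⁻ x, (f x - n) ∂μ
  refine ⟨(ε - tail) / n, ENNReal.div_pos (tsub_pos_of_lt hn).ne' (ENNReal.natCast_ne_top n),
    fun ν hν hδ => ?_⟩
  calc ∫⁻ x, f x ∂ν
      ≤ ∫⁻ x, ((f x - n) + n) ∂ν := lintegral_mono fun x => le_tsub_add
    _ = ∫⁻ x, (f x - n) ∂ν + n * ν Set.univ := by
        rw [lintegral_add_right _ measurable_const, lintegral_const]
    _ ≤ tail + n * ((ε - tail) / n) := by gcongr; exact lintegral_mono' hν le_rfl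
    _ ≤ tail + (ε - tail) := by gcongr; exact ENNReal.mul_div_le
    _ = ε := add_tsub_cancel_of_le hn.le

end AbsoluteContinuity

section NegMulLog

lemma negMulLog_add_self_le {t s : ℝ} (ht : 0 ≤ t) (hs : 0 ≤ s) (hts : s = 0 → t = 0) :
    Real.negMulLog t + t ≤ t * -Real.log s + s := by
  rcases hs.eq_or_lt with rfl | hs
  · simp [hts rfl]
  calc Real.negMulLog t + t = Real.negMulLog (s * (t / s)) + t := by field_simp
    _ = t * -Real.log s + s * Real.negMulLog (t / s) + t := by
        rw [Real.negMulLog_mul, Real.negMulLog]; field_simp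
    _ ≤ t * -Real.log s + s * (1 - t / s) + t := by
        gcongr; exact Real.negMulLog_le_one_sub_self (by positivity)
    _ = t * -Real.log s + s := by field_simp; ring

lemma negMulLog_add_le {s t : ℝ} (hs : 0 ≤ s) (ht : 0 ≤ t) :
    Real.negMulLog (s + t) ≤ Real.negMulLog s + Real.negMulLog t := by
  rcases hs.eq_or_lt with rfl | hs
  · simp
  rcases ht.eq_or_lt with rfl | ht
  · simp
  have hs_log : s * Real.log s ≤ s * Real.log (s + t) := by gcongr; linarith
  have ht_log : t * Real.log t ≤ t * Real.log (s + t) := by gcongr; linarith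
  simp only [Real.negMulLog]
  linarith

lemma ofReal_negMulLog_toReal (t : ℝ≥0∞) :
    ENNReal.ofReal (Real.negMulLog t.toReal) = ENNReal.ofReal (-Real.log t.toReal) * t := by
  rcases eq_or_ne t ⊤ with rfl | ht
  · simp
  rw [Real.negMulLog, neg_mul_comm, mul_comm, ENNReal.ofReal_mul' ENNReal.toReal_nonneg,
    ENNReal.ofReal_toReal ht]

end NegMulLog

section Entropy

variable {α : Type*} [MeasurableSpace α]

lemma distEntropy_add_le (μ ν : Measure α) :
    distEntropy (μ + ν) ≤ distEntropy μ + distEntropy ν := by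
  rw [distEntropy, distEntropy, distEntropy, ← ENNReal.tsum_add]
  refine ENNReal.tsum_le_tsum fun x => ?_
  rcases eq_or_ne (μ {x}) ⊤ with hμ | hμ
  · simp [hμ]
  rcases eq_or_ne (ν {x}) ⊤ with hν | hν
  · simp [hν]
  rw [Measure.add_apply, ENNReal.toReal_add hμ hν]
  exact (ENNReal.ofReal_le_ofReal
    (negMulLog_add_le ENNReal.toReal_nonneg ENNReal.toReal_nonneg)).trans ENNReal.ofReal_add_le

variable [MeasurableSingletonClass α]

lemma distEntropy_smul_dirac (c : ℝ≥0∞) (a : α) :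
    distEntropy (c • Measure.dirac a) = ENNReal.ofReal (Real.negMulLog c.toReal) := by
  rw [distEntropy, tsum_eq_single a fun x hx => by simp [hx.symm]]
  simp

lemma shannonEntropy_eq_distEntropy_map {Ω : Type*} [MeasurableSpace Ω] {P : Measure Ω}
    {Y : Ω → α} (hY : AEMeasurable Y P) : shannonEntropy P Y = distEntropy (P.map Y) := by
  simp only [shannonEntropy, distEntropy,
    Measure.map_apply_of_aemeasurable hY (measurableSet_singleton _)]

variable [Countable α]

lemma tsum_measure_singleton (μ : Measure α) : ∑' x, μ {x} = μ Set.univ := by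
  simpa using (lintegral_countable' (μ := μ) 1).symm

end Entropy

section Surprisal

/-- The surprisal (information content) `-log p(x)` of an outcome `x` under a law `p`. Outcomes of
probability zero get the value `0` rather than `∞`, because `Real.log 0 = 0`. -/
noncomputable def surprisal {α : Type*} [MeasurableSpace α] (p : Measure α) (x : α) : ℝ≥0∞ :=
  ENNReal.ofReal (-Real.log (p {x}).toReal)

lemma surprisal_pi_le_sum {ι : Type*} [Fintype ι] {A : ι → Type*} [∀ i, MeasurableSpace (A i)]
    (p : ∀ i, Measure (A i)) [∀ i, SigmaFinite (p i)] (x : ∀ i, A i) :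
    surprisal (Measure.pi p) x ≤ ∑ i, surprisal (p i) (x i) := by
  simp only [surprisal, Measure.pi_singleton, ENNReal.toReal_prod]
  by_cases hzero : ∃ i, (p i {x i}).toReal = 0
  · obtain ⟨i, hi⟩ := hzero
    rw [Finset.prod_eq_zero (f := fun j => (p j {x j}).toReal) (Finset.mem_univ i) hi]
    simp
  push Not at hzero
  rw [Real.log_prod fun i _ => hzero i, ← Finset.sum_neg_distrib]
  exact Finset.le_sum_of_subadditive _ ENNReal.ofReal_zero.le (fun _ _ => ENNReal.ofReal_add_le) _ _

variable {α : Type*} [MeasurableSpace α]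

lemma ofReal_negMulLog_add_le_surprisal {ρ : Measure α} [IsFiniteMeasure ρ] {t q : ℝ≥0∞} {x : α}
    (htq : t ≤ q) (hq : q ≤ 1) (hρ : ρ {x} = 0 → t = 0) :
    ENNReal.ofReal (Real.negMulLog t.toReal) + t ≤
      surprisal ρ x * t + ENNReal.ofReal (-Real.log q.toReal) * t + q * ρ {x} := by
  rcases eq_or_ne t 0 with rfl | ht0
  · simp
  have hq_top : q ≠ ⊤ := ne_top_of_le_ne_top ENNReal.one_ne_top hq
  have ht_top : t ≠ ⊤ := ne_top_of_le_ne_top hq_top htq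
  have hr0 : (ρ {x}).toReal ≠ 0 := ENNReal.toReal_ne_zero.2 ⟨mt hρ ht0, measure_ne_top _ _⟩
  have hq0 : q.toReal ≠ 0 := ENNReal.toReal_ne_zero.2 ⟨(ht0.bot_lt.trans_le htq).ne', hq_top⟩
  have tangent := negMulLog_add_self_le (t := t.toReal) (s := q.toReal * (ρ {x}).toReal)
    ENNReal.toReal_nonneg (by positivity) (fun h => absurd h (mul_ne_zero hq0 hr0))
  rw [Real.log_mul hq0 hr0] at tangent
  calc ENNReal.ofReal (Real.negMulLog t.toReal) + t
      = ENNReal.ofReal (Real.negMulLog t.toReal + t.toReal) := by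
        rw [ENNReal.ofReal_add (Real.negMulLog_nonneg ENNReal.toReal_nonneg
          (ENNReal.toReal_le_of_le_ofReal zero_le_one (by simpa using htq.trans hq)))
          ENNReal.toReal_nonneg, ENNReal.ofReal_toReal ht_top]
    _ ≤ ENNReal.ofReal (-Real.log (ρ {x}).toReal * t.toReal + -Real.log q.toReal * t.toReal
          + q.toReal * (ρ {x}).toReal) := ENNReal.ofReal_le_ofReal (by linarith)
    _ ≤ ENNReal.ofReal (-Real.log (ρ {x}).toReal * t.toReal)
          + ENNReal.ofReal (-Real.log q.toReal * t.toReal)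
          + ENNReal.ofReal (q.toReal * (ρ {x}).toReal) :=
        ENNReal.ofReal_add_le.trans (by gcongr; exact ENNReal.ofReal_add_le)
    _ = surprisal ρ x * t + ENNReal.ofReal (-Real.log q.toReal) * t + q * ρ {x} := by
        simp only [surprisal, ENNReal.ofReal_mul' ENNReal.toReal_nonneg,
          ENNReal.ofReal_toReal ht_top, ENNReal.ofReal_toReal hq_top,
          ENNReal.ofReal_toReal (measure_ne_top ρ _)]

variable [MeasurableSingletonClass α] [Countable α]

lemma lintegral_surprisal_self (p : Measure α) :
    ∫⁻ x, surprisal p x ∂p = distEntropy p := by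
  simp only [lintegral_countable', distEntropy, surprisal, ofReal_negMulLog_toReal]

theorem distEntropy_le_lintegral_surprisal_add_negMulLog {ν ρ : Measure α} [IsProbabilityMeasure ρ]
    (hν : ν Set.univ ≤ 1) (hνρ : ν ≪ ρ) :
    distEntropy ν ≤
      ∫⁻ x, surprisal ρ x ∂ν + ENNReal.ofReal (Real.negMulLog (ν Set.univ).toReal) := by
  have hν_top : ν Set.univ ≠ ⊤ := ne_top_of_le_ne_top ENNReal.one_ne_top hν
  -- Both sides carry the extra mass `ν Set.univ`, so that no subtraction occurs in `ℝ≥0∞`.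
  refine ENNReal.le_of_add_le_add_right hν_top ?_
  calc distEntropy ν + ν Set.univ
      = ∑' x, (ENNReal.ofReal (Real.negMulLog (ν {x}).toReal) + ν {x}) := by
        rw [ENNReal.tsum_add, tsum_measure_singleton, distEntropy]
    _ ≤ ∑' x, (surprisal ρ x * ν {x} + ENNReal.ofReal (-Real.log (ν Set.univ).toReal) * ν {x}
          + ν Set.univ * ρ {x}) :=
        ENNReal.tsum_le_tsum fun x => ofReal_negMulLog_add_le_surprisal
          (measure_mono (Set.subset_univ _)) hν (hνρ ·)
    _ = ∫⁻ x, surprisal ρ x ∂ν + ENNReal.ofReal (Real.negMulLog (ν Set.univ).toReal)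
          + ν Set.univ := by
        rw [ENNReal.tsum_add, ENNReal.tsum_add, ENNReal.tsum_mul_left, ENNReal.tsum_mul_left,
          tsum_measure_singleton, tsum_measure_singleton, measure_univ (μ := ρ), mul_one,
          ← lintegral_countable', ← ofReal_negMulLog_toReal]

end Surprisal

section Product

variable {ι : Type*} [Fintype ι] {A : ι → Type*} [∀ i, MeasurableSpace (A i)]
  [∀ i, MeasurableSingletonClass (A i)] [∀ i, Countable (A i)] {p : ∀ i, Measure (A i)}

lemma absolutelyContinuous_pi_of_map_le [∀ i, SigmaFinite (p i)] {ν : Measure (∀ i, A i)}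
    (hν : ∀ i, ν.map (fun x => x i) ≤ p i) : ν ≪ Measure.pi p := by
  intro s hs
  refine (measure_null_iff_singleton s.to_countable).2 fun x hx => ?_
  have hprod : ∏ i, p i {x i} = 0 := by
    rw [← Measure.pi_singleton]
    exact measure_mono_null (Set.singleton_subset_iff.2 hx) hs
  obtain ⟨i, -, hi⟩ := Finset.prod_eq_zero_iff.1 hprod
  have hmarginal : ν ((fun y => y i) ⁻¹' {x i}) = 0 := by
    rw [← Measure.map_apply (measurable_pi_apply i) (measurableSet_singleton _)]
    exact le_antisymm ((hν i _).trans_eq hi) zero_le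
  exact measure_mono_null (by simp) hmarginal

variable [∀ i, IsProbabilityMeasure (p i)]

lemma distEntropy_le_sum_lintegral_surprisal_add_negMulLog {ν : Measure (∀ i, A i)}
    (hν : ν Set.univ ≤ 1) (hνp : ∀ i, ν.map (fun x => x i) ≤ p i) :
    distEntropy ν ≤ ∑ i, ∫⁻ b, surprisal (p i) b ∂(ν.map fun x => x i)
      + ENNReal.ofReal (Real.negMulLog (ν Set.univ).toReal) := by
  refine (distEntropy_le_lintegral_surprisal_add_negMulLog hν
    (absolutelyContinuous_pi_of_map_le hνp)).trans ?_
  gcongr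
  calc ∫⁻ x, surprisal (Measure.pi p) x ∂ν
      ≤ ∫⁻ x, ∑ i, surprisal (p i) (x i) ∂ν := lintegral_mono (surprisal_pi_le_sum p)
    _ = ∑ i, ∫⁻ x, surprisal (p i) (x i) ∂ν :=
        lintegral_finsetSum _ fun i _ => measurable_of_countable _
    _ = ∑ i, ∫⁻ b, surprisal (p i) b ∂(ν.map fun x => x i) := by
        simp only [lintegral_map (measurable_of_countable (surprisal _)) (measurable_pi_apply _)]

end Product

section RandomVariables

variable {Ω : Type*} [MeasurableSpace Ω] {P : Measure Ω} {E : Set Ω}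

section Map

variable {β : Type*} {X : Ω → β}

lemma ite_const_ae_eq_restrict (hE : MeasurableSet E) (c : β) :
    (fun ω => if ω ∈ E then X ω else c) =ᵐ[P.restrict E] X :=
  ae_restrict_of_forall_mem hE fun _ hω => if_pos hω

lemma ite_const_ae_eq_restrict_compl (hE : MeasurableSet E) (c : β) :
    (fun ω => if ω ∈ E then X ω else c) =ᵐ[P.restrict Eᶜ] fun _ => c :=
  ae_restrict_of_forall_mem hE.compl fun _ hω => if_neg hω

variable [MeasurableSpace β]

lemma aemeasurable_ite_const (hX : AEMeasurable X (P.restrict E)) (hE : MeasurableSet E) (c : β) :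
    AEMeasurable (fun ω => if ω ∈ E then X ω else c) P := by
  rw [← Measure.restrict_add_restrict_compl (μ := P) hE]
  exact (hX.congr (ite_const_ae_eq_restrict hE c).symm).add_measure
    (aemeasurable_const.congr (ite_const_ae_eq_restrict_compl hE c).symm)

lemma map_ite_const (hX : AEMeasurable X (P.restrict E)) (hE : MeasurableSet E) (c : β) :
    P.map (fun ω => if ω ∈ E then X ω else c) =
      (P.restrict E).map X + P Eᶜ • Measure.dirac c := by
  have hY := aemeasurable_ite_const hX hE c
  conv_lhs => rw [← Measure.restrict_add_restrict_compl (μ := P) hE]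
  rw [AEMeasurable.map_add₀ hY.restrict hY.restrict,
    Measure.map_congr (ite_const_ae_eq_restrict hE c),
    Measure.map_congr (ite_const_ae_eq_restrict_compl hE c), Measure.map_const,
    Measure.restrict_apply_univ]

lemma map_restrict_apply_univ (hX : AEMeasurable X (P.restrict E)) :
    (P.restrict E).map X Set.univ = P E := by
  rw [Measure.map_apply_of_aemeasurable hX .univ, Set.preimage_univ, Measure.restrict_apply_univ]

lemma map_restrict_le_of_hasLaw {μ : Measure β} (hX : HasLaw X μ P) :
    (P.restrict E).map X ≤ μ := by
  rw [← hX.map_eq]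
  exact Measure.map_mono_of_aemeasurable Measure.restrict_le_self hX.aemeasurable

end Map

variable [IsProbabilityMeasure P]

lemma ofReal_binEntropy_measure (hE : MeasurableSet E) :
    ENNReal.ofReal (Real.binEntropy (P E).toReal) =
      ENNReal.ofReal (Real.negMulLog (P E).toReal)
        + ENNReal.ofReal (Real.negMulLog (P Eᶜ).toReal) := by
  have hcompl : (P Eᶜ).toReal = 1 - (P E).toReal := probReal_compl_eq_one_sub hE
  have hnonneg (s : Set Ω) : 0 ≤ Real.negMulLog (P s).toReal :=
    Real.negMulLog_nonneg measureReal_nonneg measureReal_le_one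
  rw [Real.binEntropy_eq_negMulLog_add_negMulLog_one_sub, ← hcompl,
    ENNReal.ofReal_add (hnonneg E) (hnonneg Eᶜ)]

lemma shannonEntropy_ite_const_le {ι : Type*} [Fintype ι] {A : ι → Type*}
    [∀ i, MeasurableSpace (A i)] [∀ i, MeasurableSingletonClass (A i)] [∀ i, Countable (A i)]
    {p : ∀ i, Measure (A i)} [∀ i, IsProbabilityMeasure (p i)] {Z : ∀ i, Ω → A i}
    (hZ : ∀ i, HasLaw (Z i) (p i) P) (hE : MeasurableSet E) (c : ∀ i, A i) :
    shannonEntropy P (fun ω => if ω ∈ E then (fun i => Z i ω) else c) ≤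
      ∑ i, ∫⁻ b, surprisal (p i) b ∂((P.restrict E).map (Z i))
        + ENNReal.ofReal (Real.binEntropy (P E).toReal) := by
  have hZ_joint : AEMeasurable (fun ω i => Z i ω) (P.restrict E) :=
    aemeasurable_pi_lambda _ fun i => (hZ i).aemeasurable.restrict
  set ν := (P.restrict E).map (fun ω i => Z i ω)
  have hν_univ : ν Set.univ = P E := map_restrict_apply_univ hZ_joint
  have hν_marginal (i : ι) : ν.map (fun x => x i) = (P.restrict E).map (Z i) :=
    AEMeasurable.map_map_of_aemeasurable (measurable_pi_apply i).aemeasurable hZ_joint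
  have hν_le (i : ι) : ν.map (fun x => x i) ≤ p i :=
    (hν_marginal i).trans_le (map_restrict_le_of_hasLaw (hZ i))
  have hν_entropy := distEntropy_le_sum_lintegral_surprisal_add_negMulLog
    (hν_univ.trans_le prob_le_one) hν_le
  simp only [hν_univ, hν_marginal] at hν_entropy
  rw [shannonEntropy_eq_distEntropy_map (aemeasurable_ite_const hZ_joint hE c)]
  calc distEntropy (P.map fun ω => if ω ∈ E then (fun i => Z i ω) else c)
      = distEntropy (ν + P Eᶜ • Measure.dirac c) := by rw [map_ite_const hZ_joint hE c]
    _ ≤ distEntropy ν + ENNReal.ofReal (Real.negMulLog (P Eᶜ).toReal) :=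
        (distEntropy_add_le _ _).trans_eq (by rw [distEntropy_smul_dirac])
    _ ≤ ∑ i, ∫⁻ b, surprisal (p i) b ∂((P.restrict E).map (Z i))
          + ENNReal.ofReal (Real.negMulLog (P E).toReal)
          + ENNReal.ofReal (Real.negMulLog (P Eᶜ).toReal) := by gcongr
    _ = _ := by rw [add_assoc, ofReal_binEntropy_measure hE]

end RandomVariables

lemma exists_pos_forall_hasLaw_lintegral_surprisal_le {A : Type*} [MeasurableSpace A]
    [MeasurableSingletonClass A] [Countable A] {p : Measure A}
    (hent : distEntropy p < ⊤) {ε : ℝ≥0∞} (hε : 0 < ε) :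
    ∃ δ > 0, ∀ {Ω : Type*} [MeasurableSpace Ω] {P : Measure Ω} {X : Ω → A} {E : Set Ω},
      HasLaw X p P → P E < δ → ∫⁻ b, surprisal p b ∂((P.restrict E).map X) ≤ ε := by
  obtain ⟨δ, hδ, h⟩ := exists_pos_forall_le_lintegral_le_of_measure_univ_lt
    (measurable_of_countable (surprisal p)).aemeasurable
    ((lintegral_surprisal_self p).trans_lt hent).ne hε
  refine ⟨δ, hδ, fun hX hE => h _ (map_restrict_le_of_hasLaw hX) ?_⟩
  rwa [map_restrict_apply_univ hX.aemeasurable.restrict]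

lemma tendsto_ofReal_binEntropy_toReal_zero :
    Tendsto (fun q : ℝ≥0∞ => ENNReal.ofReal (Real.binEntropy q.toReal)) (𝓝 0) (𝓝 0) := by
  have hbin : Tendsto (fun x => ENNReal.ofReal (Real.binEntropy x)) (𝓝 0) (𝓝 0) := by
    simpa [Function.comp_def] using
      (ENNReal.continuous_ofReal.comp Real.binEntropy_continuous).tendsto 0
  exact hbin.comp (ENNReal.tendsto_toReal ENNReal.zero_ne_top)

theorem statement1_general {A : Type*} [MeasurableSpace A] [MeasurableSingletonClass A]
    [Countable A] (p : Measure A) [IsProbabilityMeasure p] (hent : distEntropy p < ⊤) :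
    ∀ ε : ℝ, 0 < ε → ∃ δ : ℝ, 0 < δ ∧
      ∀ (Ω : Type*) (_ : MeasurableSpace Ω) (P : Measure Ω), IsProbabilityMeasure P →
        ∀ (ι : Type*) [Fintype ι] [Nonempty ι] (Z : ι → Ω → A), (∀ i, HasLaw (Z i) p P) →
          ∀ (c : ι → A) (E : Set Ω), MeasurableSet E → P E < ENNReal.ofReal δ →
            shannonEntropy P (fun ω => if ω ∈ E then (fun i => Z i ω) else c) ≤
              Fintype.card ι * ENNReal.ofReal ε := by
  intro ε hε
  have hε' : 0 < ENNReal.ofReal (ε / 2) := ENNReal.ofReal_pos.2 (half_pos hε)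
  obtain ⟨η, hη, hsurprisal⟩ := exists_pos_forall_hasLaw_lintegral_surprisal_le hent hε'
  obtain ⟨θ, hθ, hbin⟩ := ENNReal.nhds_zero_basis.eventually_iff.1
    (tendsto_ofReal_binEntropy_toReal_zero.eventually_lt_const hε')
  obtain ⟨δ, hδ, hδ_lt⟩ := ENNReal.lt_iff_exists_nnreal_btwn.1 (lt_min hη hθ)
  refine ⟨δ, by exact_mod_cast hδ, fun Ω _ P _ ι _ _ Z hZ c E hE hPE => ?_⟩
  rw [ENNReal.ofReal_coe_nnreal] at hPE
  obtain ⟨hPEη, hPEθ⟩ := lt_min_iff.1 (hPE.trans hδ_lt)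
  calc shannonEntropy P (fun ω => if ω ∈ E then (fun i => Z i ω) else c)
      ≤ ∑ i, ∫⁻ b, surprisal p b ∂((P.restrict E).map (Z i))
          + ENNReal.ofReal (Real.binEntropy (P E).toReal) := shannonEntropy_ite_const_le hZ hE c
    _ ≤ ∑ _ : ι, ENNReal.ofReal (ε / 2) + ENNReal.ofReal (ε / 2) :=
        add_le_add (Finset.sum_le_sum fun i _ => hsurprisal (hZ i) hPEη) (hbin hPEθ).le
    _ ≤ Fintype.card ι * ENNReal.ofReal (ε / 2) + Fintype.card ι * ENNReal.ofReal (ε / 2) := by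
        rw [Finset.sum_const, Finset.card_univ, nsmul_eq_mul]
        gcongr
        exact le_mul_of_one_le_left' (by exact_mod_cast Fintype.card_pos)
    _ = Fintype.card ι * ENNReal.ofReal ε := by
        rw [← mul_add, ← ENNReal.ofReal_add (half_pos hε).le (half_pos hε).le, add_halves]

/-- for a probability distribution `p` on `A \ {a}` with finite
entropy and every `ε > 0`, there is `δ > 0` depending only on `ε` and `p`
such that: for every probability space `(Ω, P)`, every `m ≥ 1`, every family
of random variables `Z₁, …, Z_m` each with law `p` (not necessarily
independent), and every measurable `E ⊆ Ω` with `P(E) < δ`, the `A^m`-valued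
variable equal to `(Z₁, …, Z_m)` on `E` and to `(a, …, a)` off `E` has entropy
at most `m·ε`. -/
theorem statement1 {A : Type*} [MeasurableSpace A]
    [MeasurableSingletonClass A] [Countable A]
    (a : A) (p : Measure A) [IsProbabilityMeasure p]
    (hpa : p {a} = 0) (hent : distEntropy p < ⊤) :
    ∀ ε : ℝ, 0 < ε → ∃ δ : ℝ, 0 < δ ∧
      ∀ (Ω : Type*) (_ : MeasurableSpace Ω) (P : Measure Ω),
        IsProbabilityMeasure P →
        ∀ (m : ℕ), 1 ≤ m →
        ∀ (Z : Fin m → Ω → A), (∀ i, Measurable (Z i)) →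
          (∀ i, P.map (Z i) = p) →
          ∀ E : Set Ω, MeasurableSet E → P E < ENNReal.ofReal δ →
            shannonEntropy P
              (fun ω => if ω ∈ E then (fun i => Z i ω) else (fun _ => a)) ≤
              (m : ℝ≥0∞) * ENNReal.ofReal ε := by
  intro ε hε
  obtain ⟨δ, hδ, h⟩ := statement1_general p hent ε hε
  refine ⟨δ, hδ, fun Ω _ P hP m hm Z hZ hlaw E hE hPE => ?_⟩
  have : Nonempty (Fin m) := Fin.pos_iff_nonempty.1 hm
  simpa using h Ω _ P hP (Fin m) Z (fun i => ⟨(hZ i).aemeasurable, hlaw i⟩) (fun _ => a) E hE hPE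
end

section
/- Let X be a δ-hyperbolic metric space and let x_0, x_1, x_2, x_3 be a (C,D)-chain in X with D ≥ 2C + 4δ + 1. Then d(x_0,x_3) ≥ 3D − 4C − 8δ; in particular d(x_0,x_3) ≥ D. -/
/-- Gromov product `(x,y)_z = (d(x,z) + d(y,z) − d(x,y))/2`. -/
noncomputable def gromov {X : Type*} [MetricSpace X] (x y z : X) : ℝ :=
  (dist x z + dist y z - dist x y) / 2

/-- A metric space is `δ`-hyperbolic if
`(x,y)_o ≥ min((x,z)_o, (y,z)_o) − δ` for all `x, y, z, o`. -/
def IsDeltaHyperbolic (X : Type*) [MetricSpace X] (δ : ℝ) : Prop :=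
  ∀ x y z o : X, min (gromov x z o) (gromov y z o) - δ ≤ gromov x y o

section GromovProduct

variable {X : Type*} [MetricSpace X]

theorem dist_eq_add_sub_two_mul_gromov (x y z : X) :
    dist x y = dist x z + dist z y - 2 * gromov x y z := by
  rw [gromov, dist_comm z y]
  ring

theorem gromov_add_gromov (x y z : X) : gromov y z x + gromov x z y = dist x y := by
  rw [gromov, gromov, dist_comm y x, dist_comm z x, dist_comm z y]
  ring

theorem IsDeltaHyperbolic.gromov_le_of_add_lt {δ : ℝ} (hX : IsDeltaHyperbolic X δ) {x y z o : X}
    (h : gromov x y o + δ < gromov y z o) : gromov x z o ≤ gromov x y o + δ := by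
  have hmin : min (gromov x z o) (gromov y z o) ≤ gromov x y o + δ :=
    sub_le_iff_le_add.mp (hX x y z o)
  exact (min_le_iff.mp hmin).resolve_right h.not_ge

/- The products `(x₂,x₃)_{x₁}` and `(x₁,x₃)_{x₂}` add up to `d(x₁,x₂)`, so the first one exceeds
`(x₀,x₂)_{x₁} + δ`. Hyperbolicity at `x₁` then forces `(x₀,x₃)_{x₁}` to be small. -/
theorem statement3_general {δ : ℝ} (hX : IsDeltaHyperbolic X δ) {x₀ x₁ x₂ x₃ : X}
    (h : gromov x₀ x₂ x₁ + gromov x₁ x₃ x₂ + δ < dist x₁ x₂) :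
    dist x₀ x₁ + dist x₁ x₂ + dist x₂ x₃ - 2 * gromov x₀ x₂ x₁ - 2 * gromov x₁ x₃ x₂ - 2 * δ
      ≤ dist x₀ x₃ := by
  have hlarge : gromov x₀ x₂ x₁ + δ < gromov x₂ x₃ x₁ := by
    linarith [gromov_add_gromov x₁ x₂ x₃]
  have hsmall : gromov x₀ x₃ x₁ ≤ gromov x₀ x₂ x₁ + δ := hX.gromov_le_of_add_lt hlarge
  calc dist x₀ x₁ + dist x₁ x₂ + dist x₂ x₃ - 2 * gromov x₀ x₂ x₁ - 2 * gromov x₁ x₃ x₂ - 2 * δ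
      = dist x₀ x₁ + dist x₁ x₃ - 2 * (gromov x₀ x₂ x₁ + δ) := by
        rw [dist_eq_add_sub_two_mul_gromov x₁ x₃ x₂]
        ring
    _ ≤ dist x₀ x₁ + dist x₁ x₃ - 2 * gromov x₀ x₃ x₁ := by gcongr
    _ = dist x₀ x₃ := (dist_eq_add_sub_two_mul_gromov x₀ x₃ x₁).symm

end GromovProduct

/-- if `x₀, x₁, x₂, x₃` is a `(C,D)`-chain with `D ≥ 2C + 4δ + 1`
in a `δ`-hyperbolic space, then `d(x₀,x₃) ≥ 3D − 4C − 8δ`; in particular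
`d(x₀,x₃) ≥ D`. -/
theorem statement3 {X : Type*} [MetricSpace X] (δ C D : ℝ)
    (hδ : 0 ≤ δ) (hC : 0 ≤ C) (hX : IsDeltaHyperbolic X δ)
    (x₀ x₁ x₂ x₃ : X)
    (h₁ : gromov x₀ x₂ x₁ ≤ C) (h₂ : gromov x₁ x₃ x₂ ≤ C)
    (hd₀ : D ≤ dist x₀ x₁) (hd₁ : D ≤ dist x₁ x₂) (hd₂ : D ≤ dist x₂ x₃)
    (hD : 2 * C + 4 * δ + 1 ≤ D) :
    3 * D - 4 * C - 8 * δ ≤ dist x₀ x₃ ∧ D ≤ dist x₀ x₃ := by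
  have h := statement3_general hX (x₀ := x₀) (x₁ := x₁) (x₂ := x₂) (x₃ := x₃) (by linarith)
  constructor <;> linarith
end

section
/- Let X be a geodesic metric space in which all geodesic triangles are δ-thin. Let x, y, a ∈ X, let C, K ≥ 0, let γ be a geodesic from x to y, and suppose d(a, γ(t)) ≤ C for some t ∈ [0, d(x,y)]. If g : X → X is a surjective isometry with d(x, g x) ≤ K and d(y, g y) ≤ K, then d(a, g a) ≤ 2C + 2K + 4δ. -/
/-- `γ : ℝ → X` (restricted to `[0, d(x,y)]`) is a geodesic from `x` to `y`. -/
def IsGeodesicFromTo {X : Type*} [MetricSpace X] (x y : X) (γ : ℝ → X) : Prop :=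
  γ 0 = x ∧ γ (dist x y) = y ∧
  ∀ s ∈ Set.Icc (0 : ℝ) (dist x y), ∀ t ∈ Set.Icc (0 : ℝ) (dist x y),
    dist (γ s) (γ t) = |s - t|

/-- `X` is a geodesic metric space. -/
def IsGeodesicSpace (X : Type*) [MetricSpace X] : Prop :=
  ∀ x y : X, ∃ γ : ℝ → X, IsGeodesicFromTo x y γ

/-- All geodesic triangles of `X` are `δ`-thin: every point on one side lies
within distance `δ` of the union of the other two sides. -/
def ThinTriangles (X : Type*) [MetricSpace X] (δ : ℝ) : Prop :=
  ∀ (x y z : X) (γ₁ γ₂ γ₃ : ℝ → X),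
    IsGeodesicFromTo x y γ₁ → IsGeodesicFromTo y z γ₂ → IsGeodesicFromTo x z γ₃ →
    ∀ p ∈ γ₁ '' Set.Icc (0 : ℝ) (dist x y),
      ∃ q ∈ (γ₂ '' Set.Icc (0 : ℝ) (dist y z)) ∪ (γ₃ '' Set.Icc (0 : ℝ) (dist x z)),
        dist p q ≤ δ

/-!
A geodesic quadrilateral splits along a diagonal into two triangles, so each of its sides lies
within `2δ` of the other three. Apply this to a point `p` on a geodesic from `x` to `y`, in the
quadrilateral whose opposite side is the image of that geodesic under `g`. Whichever side carries
the nearby point `q`, matching distances along the sides gives `d(p, g p) ≤ K + 2 d(p, q)`, hence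
`d(p, g p) ≤ K + 4δ`. Replacing `p` by a point `a` within `C` of it costs another `2C`.
-/

theorem dist_le_dist_add_two_mul_of_between {M : Type*} [PseudoMetricSpace M] {x x' p p' q : M}
    (hq : dist x q + dist q x' = dist x x') (hp : dist x p = dist x' p') :
    dist p p' ≤ dist x x' + 2 * dist p q := by
  calc dist p p' ≤ dist p q + dist q x' + dist x' p' := dist_triangle4 p q x' p'
    _ = dist p q + dist q x' + dist x p := by rw [hp]
    _ ≤ dist p q + dist q x' + (dist x q + dist p q) := by
        gcongr
        exact dist_triangle_right x p q
    _ = dist x x' + 2 * dist p q := by rw [← hq]; ring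

namespace IsGeodesicFromTo

variable {X : Type*} [MetricSpace X] {x y : X} {γ : ℝ → X}

theorem dist_left (hγ : IsGeodesicFromTo x y γ) {t : ℝ} (ht : t ∈ Set.Icc 0 (dist x y)) :
    dist x (γ t) = t := by
  calc dist x (γ t) = dist (γ 0) (γ t) := by rw [hγ.1]
    _ = |0 - t| := hγ.2.2 0 ⟨le_rfl, dist_nonneg⟩ t ht
    _ = t := by rw [zero_sub, abs_neg, abs_of_nonneg ht.1]

theorem dist_right (hγ : IsGeodesicFromTo x y γ) {t : ℝ} (ht : t ∈ Set.Icc 0 (dist x y)) :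
    dist (γ t) y = dist x y - t := by
  calc dist (γ t) y = dist (γ t) (γ (dist x y)) := by rw [hγ.2.1]
    _ = |t - dist x y| := hγ.2.2 t ht _ ⟨dist_nonneg, le_rfl⟩
    _ = dist x y - t := by rw [abs_sub_comm, abs_of_nonneg (sub_nonneg.2 ht.2)]

theorem dist_add_dist (hγ : IsGeodesicFromTo x y γ) {q : X}
    (hq : q ∈ γ '' Set.Icc 0 (dist x y)) : dist x q + dist q y = dist x y := by
  obtain ⟨t, ht, rfl⟩ := hq
  rw [hγ.dist_left ht, hγ.dist_right ht, add_sub_cancel]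

theorem comp_isometry {Y : Type*} [MetricSpace Y] {g : X → Y} (hγ : IsGeodesicFromTo x y γ)
    (hg : Isometry g) : IsGeodesicFromTo (g x) (g y) (g ∘ γ) := by
  obtain ⟨h_start, h_end, h_dist⟩ := hγ
  refine ⟨congrArg g h_start, ?_, fun s hs t ht ↦ ?_⟩
  · rw [hg.dist_eq, Function.comp_apply, h_end]
  · rw [hg.dist_eq] at hs ht
    rw [Function.comp_apply, Function.comp_apply, hg.dist_eq, h_dist s hs t ht]

theorem dist_apply_le_dist_add_two_mul {x' y' p : X} {γ' : ℝ → X}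
    (hγ' : IsGeodesicFromTo x' y' γ') {s t : ℝ} (hs : s ∈ Set.Icc 0 (dist x' y'))
    (ht : t ∈ Set.Icc 0 (dist x' y')) (hp : dist x p = t) :
    dist p (γ' t) ≤ dist x x' + 2 * dist p (γ' s) := by
  have h_param : |s - t| ≤ dist x x' + dist p (γ' s) := by
    calc |s - t| = dist (dist x p) (dist x' (γ' s)) := by
          rw [hp, hγ'.dist_left hs, Real.dist_eq, abs_sub_comm]
      _ ≤ dist x x' + dist p (γ' s) := dist_dist_dist_le x p x' (γ' s)
  calc dist p (γ' t) ≤ dist p (γ' s) + dist (γ' s) (γ' t) := dist_triangle _ _ _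
    _ = dist p (γ' s) + |s - t| := by rw [hγ'.2.2 s hs t ht]
    _ ≤ dist p (γ' s) + (dist x x' + dist p (γ' s)) := by gcongr
    _ = dist x x' + 2 * dist p (γ' s) := by ring

end IsGeodesicFromTo

namespace ThinTriangles

variable {X : Type*} [MetricSpace X] {δ : ℝ} {x y x' y' : X} {γ γ' : ℝ → X}

theorem exists_dist_le_two_mul_of_quadrilateral (hthin : ThinTriangles X δ) {α β η : ℝ → X}
    (hγ : IsGeodesicFromTo x y γ) (hγ' : IsGeodesicFromTo x' y' γ')
    (hα : IsGeodesicFromTo x x' α) (hβ : IsGeodesicFromTo y y' β)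
    (hη : IsGeodesicFromTo y x' η) {p : X} (hp : p ∈ γ '' Set.Icc 0 (dist x y)) :
    ∃ q ∈ γ' '' Set.Icc 0 (dist x' y') ∪ α '' Set.Icc 0 (dist x x') ∪ β '' Set.Icc 0 (dist y y'),
      dist p q ≤ 2 * δ := by
  obtain ⟨r, hr | hr, hpr⟩ := hthin x y x' γ η α hγ hη hα p hp
  · obtain ⟨q, hq, hrq⟩ := hthin y x' y' η γ' β hη hγ' hβ r hr
    refine ⟨q, hq.imp_left Or.inl, ?_⟩
    linarith [dist_triangle p r q]
  · have hδ : 0 ≤ δ := dist_nonneg.trans hpr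
    exact ⟨r, .inl (.inr hr), by linarith⟩

theorem dist_geodesics_le (hthin : ThinTriangles X δ) (hgeo : IsGeodesicSpace X)
    (hγ : IsGeodesicFromTo x y γ) (hγ' : IsGeodesicFromTo x' y' γ')
    (hlen : dist x y = dist x' y') {K : ℝ} (hx : dist x x' ≤ K) (hy : dist y y' ≤ K) {t : ℝ}
    (ht : t ∈ Set.Icc 0 (dist x y)) : dist (γ t) (γ' t) ≤ K + 4 * δ := by
  have ht' : t ∈ Set.Icc 0 (dist x' y') := hlen ▸ ht
  obtain ⟨α, hα⟩ := hgeo x x'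
  obtain ⟨β, hβ⟩ := hgeo y y'
  obtain ⟨η, hη⟩ := hgeo y x'
  obtain ⟨q, hq, hpq⟩ := hthin.exists_dist_le_two_mul_of_quadrilateral hγ hγ' hα hβ hη
    (Set.mem_image_of_mem γ ht)
  suffices dist (γ t) (γ' t) ≤ K + 2 * dist (γ t) q by linarith
  rcases hq with (⟨s, hs, rfl⟩ | hqα) | hqβ
  · exact (hγ'.dist_apply_le_dist_add_two_mul hs ht' (hγ.dist_left ht)).trans (by gcongr)
  · have h_left : dist x (γ t) = dist x' (γ' t) := by rw [hγ.dist_left ht, hγ'.dist_left ht']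
    exact (dist_le_dist_add_two_mul_of_between (hα.dist_add_dist hqα) h_left).trans (by gcongr)
  · have h_right : dist y (γ t) = dist y' (γ' t) := by
      rw [dist_comm y, dist_comm y', hγ.dist_right ht, hγ'.dist_right ht', hlen]
    exact (dist_le_dist_add_two_mul_of_between (hβ.dist_add_dist hqβ) h_right).trans (by gcongr)

end ThinTriangles

theorem statement6_general {X : Type*} [MetricSpace X] {δ C K : ℝ}
    (hgeo : IsGeodesicSpace X) (hthin : ThinTriangles X δ)
    {x y a : X} {γ : ℝ → X} (hγ : IsGeodesicFromTo x y γ)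
    {t : ℝ} (ht : t ∈ Set.Icc (0 : ℝ) (dist x y)) (ha : dist a (γ t) ≤ C)
    {g : X → X} (hg : Isometry g) (hx : dist x (g x) ≤ K) (hy : dist y (g y) ≤ K) :
    dist a (g a) ≤ 2 * C + K + 4 * δ := by
  have h_move : dist (γ t) (g (γ t)) ≤ K + 4 * δ :=
    hthin.dist_geodesics_le hgeo hγ (hγ.comp_isometry hg) (hg.dist_eq x y).symm hx hy ht
  have h_back : dist (g (γ t)) (g a) ≤ C := by rwa [hg.dist_eq, dist_comm]
  calc dist a (g a) ≤ dist a (γ t) + dist (γ t) (g (γ t)) + dist (g (γ t)) (g a) :=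
        dist_triangle4 _ _ _ _
    _ ≤ C + (K + 4 * δ) + C := by gcongr
    _ = 2 * C + K + 4 * δ := by ring

/-- if `a` lies within `C` of a geodesic from `x` to `y` and the
surjective isometry `g` moves `x` and `y` by at most `K`, then `g` moves `a`
by at most `2C + 2K + 4δ`. -/
theorem statement6 {X : Type*} [MetricSpace X] (δ C K : ℝ)
    (hδ : 0 ≤ δ) (hC : 0 ≤ C) (hK : 0 ≤ K)
    (hgeo : IsGeodesicSpace X) (hthin : ThinTriangles X δ)
    (x y a : X) (γ : ℝ → X) (hγ : IsGeodesicFromTo x y γ)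
    (t : ℝ) (ht : t ∈ Set.Icc (0 : ℝ) (dist x y)) (ha : dist a (γ t) ≤ C)
    (g : X → X) (hg : Isometry g) (hgsurj : Function.Surjective g)
    (hx : dist x (g x) ≤ K) (hy : dist y (g y) ≤ K) :
    dist a (g a) ≤ 2 * C + 2 * K + 4 * δ := by
  have h := statement6_general hgeo hthin hγ ht ha hg hx hy
  linarith
end
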